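/- (Main theorem: semi-discrete entropy inequality for the optimized entropy stable scheme.) Let m ∈ ℕ, Δx > 0, η : ℝ^m → ℝ differentiable, and let u_{i−1}, u_i, u_{i+1} : ℝ → ℝ^m with u_i differentiable; set v_j(t) = ∇η(u_j(t)). Suppose for every t there are ψ_{i−1}(t), ψ_i(t), ψ_{i+1}(t) ∈ ℝ and fluxes F*₊(t), F*₋(t) ∈ ℝ^m satisfying ⟨v_{i+1} − v_i, F*₊⟩ = ψ_{i+1} − ψ_i and ⟨v_i − v_{i−1}, F*₋⟩ = ψ_i − ψ_{i−1}, and arbitrary fluxes F^s₊(t), F^s₋(t) ∈ ℝ^m. Define d₊ = F*₊ − F^s₊ if F*₊ − F^s₊ and v_{i+1} − v_i satisfy the componentwise sign condition and d₊ = 0 otherwise (d₋ analogously), F̂₊ = F*₊ − d₊, F̂₋ = F*₋ − d₋, q̂₊ = q*₊ − ⟨(v_i + v_{i+1})/2, d₊⟩, q̂₋ = q*₋ − ⟨(v_{i−1} + v_i)/2, d₋⟩, with q*_± the numerical entropy fluxes of F*_±. If u_i′(t) = −(F̂₊(t) − F̂₋(t))/Δx for all t, then d/dt [η(u_i(t))]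 + (q̂₊(t) − q̂₋(t))/Δx ≤ 0 for all t. -/

import Mathlib

/-!
For an interface flux `F`, the numerical entropy flux exceeds `⟨v_R, F⟩ - ψ_R` by the same amount
by which it falls short of `⟨v_L, F⟩ - ψ_L`, namely half of `(ψ_R - ψ_L) - ⟨v_R - v_L, F⟩`.
This amount is nonnegative exactly when `F` satisfies Tadmor's condition as an inequality, which
subtracting a diffusion `d` with `0 ≤ ⟨v_R - v_L, d⟩` from an entropy conservative flux achieves.
Applied at both interfaces of cell `i`, this gives `q₊ - q₋ ≤ ⟨v_i, F₊ - F₋⟩`, and by the chain rule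
and the scheme the right-hand side is `-Δx` times the time derivative of `η(u_i)`.
-/

section Interface

variable {ι : Type*} [Fintype ι] {vL vR F d : ι → ℝ} {ψL ψR : ℝ}

/-- Tadmor's condition for an entropy conservative flux, the property required of `F*_±`. -/
def IsEntropyConservative (vL vR : ι → ℝ) (ψL ψR : ℝ) (F : ι → ℝ) : Prop :=
  (vR - vL) ⬝ᵥ F = ψR - ψL

/-- Tadmor's inequality for an entropy stable flux, the property of `F̂_±` that yields the entropy
inequality. -/
def IsEntropyStable (vL vR : ι → ℝ) (ψL ψR : ℝ) (F : ι → ℝ) : Prop :=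
  (vR - vL) ⬝ᵥ F ≤ ψR - ψL

/-- The numerical entropy flux associated with a numerical flux `F`, which need not be entropy
conservative: `q̂_±` is its value at `F̂_±`. -/
noncomputable def numericalEntropyFlux (vL vR : ι → ℝ) (ψL ψR : ℝ) (F : ι → ℝ) : ℝ :=
  ((vL + vR) / 2) ⬝ᵥ F - (ψL + ψR) / 2

theorem IsEntropyConservative.isEntropyStable_sub (hF : IsEntropyConservative vL vR ψL ψR F)
    (hd : 0 ≤ (vR - vL) ⬝ᵥ d) : IsEntropyStable vL vR ψL ψR (F - d) := by
  rw [IsEntropyStable, dotProduct_sub, hF]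
  exact sub_le_self _ hd

theorem numericalEntropyFlux_sub (vL vR : ι → ℝ) (ψL ψR : ℝ) (F d : ι → ℝ) :
    numericalEntropyFlux vL vR ψL ψR (F - d) =
      numericalEntropyFlux vL vR ψL ψR F - ((vL + vR) / 2) ⬝ᵥ d := by
  rw [numericalEntropyFlux, numericalEntropyFlux, dotProduct_sub, sub_right_comm]

theorem numericalEntropyFlux_eq_half_add (vL vR : ι → ℝ) (ψL ψR : ℝ) (F : ι → ℝ) :
    numericalEntropyFlux vL vR ψL ψR F = ((vL ⬝ᵥ F - ψL) + (vR ⬝ᵥ F - ψR)) / 2 := by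
  have hmean : (vL + vR) / 2 = (2⁻¹ : ℝ) • (vL + vR) := by
    ext l
    simp [div_eq_inv_mul]
  rw [numericalEntropyFlux, hmean, smul_dotProduct, add_dotProduct, smul_eq_mul]
  ring

theorem IsEntropyStable.dotProduct_right_sub_le (hF : IsEntropyStable vL vR ψL ψR F) :
    vR ⬝ᵥ F - ψR ≤ vL ⬝ᵥ F - ψL := by
  rw [IsEntropyStable, sub_dotProduct] at hF
  linarith

theorem IsEntropyStable.numericalEntropyFlux_le (hF : IsEntropyStable vL vR ψL ψR F) :
    numericalEntropyFlux vL vR ψL ψR F ≤ vL ⬝ᵥ F - ψL := by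
  rw [numericalEntropyFlux_eq_half_add]
  linarith [hF.dotProduct_right_sub_le]

theorem IsEntropyStable.le_numericalEntropyFlux (hF : IsEntropyStable vL vR ψL ψR F) :
    vR ⬝ᵥ F - ψR ≤ numericalEntropyFlux vL vR ψL ψR F := by
  rw [numericalEntropyFlux_eq_half_add]
  linarith [hF.dotProduct_right_sub_le]

theorem numericalEntropyFlux_sub_le_dotProduct {vm vi vp Fm Fp : ι → ℝ} {ψm ψi ψp : ℝ}
    (hFm : IsEntropyStable vm vi ψm ψi Fm) (hFp : IsEntropyStable vi vp ψi ψp Fp) :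
    numericalEntropyFlux vi vp ψi ψp Fp - numericalEntropyFlux vm vi ψm ψi Fm ≤
      vi ⬝ᵥ (Fp - Fm) :=
  calc
    _ ≤ (vi ⬝ᵥ Fp - ψi) - (vi ⬝ᵥ Fm - ψi) :=
      sub_le_sub hFp.numericalEntropyFlux_le hFm.le_numericalEntropyFlux
    _ = vi ⬝ᵥ (Fp - Fm) := by rw [sub_sub_sub_cancel_right, dotProduct_sub]

end Interface

section SignCondition

variable {ι : Type*} {a b g w d : ι → ℝ}

/-- The componentwise sign condition, which decides whether the diffusion is switched on. -/
def SameSigns (a b : ι → ℝ) : Prop :=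
  ∀ l, Real.sign (a l) = Real.sign (b l)

theorem mul_nonneg_of_real_sign_eq {x y : ℝ} (h : Real.sign x = Real.sign y) : 0 ≤ x * y := by
  have hx := Real.sign_mul_nonneg x
  have hy := Real.sign_mul_nonneg y
  rw [← h] at hy
  obtain hneg | hzero | hpos := Real.sign_apply_eq x
  · rw [hneg, neg_one_mul, neg_nonneg] at hx hy
    exact mul_nonneg_of_nonpos_of_nonpos hx hy
  · rw [Real.sign_eq_zero_iff.mp hzero, zero_mul]
  · rw [hpos, one_mul] at hx hy
    exact mul_nonneg hx hy

variable [Fintype ι]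

theorem SameSigns.dotProduct_nonneg (h : SameSigns a b) : 0 ≤ a ⬝ᵥ b :=
  Finset.sum_nonneg fun l _ => mul_nonneg_of_real_sign_eq (h l)

theorem dotProduct_nonneg_of_switch (hon : SameSigns g w → d = g)
    (hoff : ¬ SameSigns g w → d = 0) : 0 ≤ w ⬝ᵥ d := by
  by_cases h : SameSigns g w
  · rw [hon h, dotProduct_comm]
    exact h.dotProduct_nonneg
  · rw [hoff h, dotProduct_zero]

end SignCondition

section Scheme

variable {ι : Type*} [Fintype ι] [DecidableEq ι]

theorem hasDerivAt_comp_dotProduct {η : (ι → ℝ) → ℝ} {u : ℝ → ι → ℝ} {u' v : ι → ℝ} {t : ℝ}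
    (hη : DifferentiableAt ℝ η (u t)) (hv : ∀ l, v l = fderiv ℝ η (u t) (Pi.single l 1))
    (hu : HasDerivAt u u' t) : HasDerivAt (fun s => η (u s)) (v ⬝ᵥ u') t := by
  have hgrad : v = (dotProductEquiv ℝ ι).symm (fderiv ℝ η (u t)) := funext hv
  have hpair : v ⬝ᵥ u' = fderiv ℝ η (u t) u' := by
    rw [hgrad, ← dotProductEquiv_apply_apply, LinearEquiv.apply_symm_apply,
      ContinuousLinearMap.coe_coe]
  rw [hpair]
  exact hη.hasFDerivAt.comp_hasDerivAt t hu

theorem entropy_inequality_of_isEntropyStable {Δx : ℝ} (hΔx : 0 < Δx)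
    {η : (ι → ℝ) → ℝ} {u : ℝ → ι → ℝ} {t : ℝ} {vm vi vp Fm Fp : ι → ℝ} {ψm ψi ψp : ℝ}
    (hη : DifferentiableAt ℝ η (u t)) (hvi : ∀ l, vi l = fderiv ℝ η (u t) (Pi.single l 1))
    (hFm : IsEntropyStable vm vi ψm ψi Fm) (hFp : IsEntropyStable vi vp ψi ψp Fp)
    (hu : HasDerivAt u (-(Δx)⁻¹ • (Fp - Fm)) t) :
    deriv (fun s => η (u s)) t +
      (numericalEntropyFlux vi vp ψi ψp Fp - numericalEntropyFlux vm vi ψm ψi Fm) / Δx ≤ 0 := by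
  have hderiv : deriv (fun s => η (u s)) t = -(vi ⬝ᵥ (Fp - Fm) / Δx) := by
    rw [(hasDerivAt_comp_dotProduct hη hvi hu).deriv, dotProduct_smul, smul_eq_mul, neg_mul,
      inv_mul_eq_div]
  rw [hderiv, neg_add_nonpos_iff]
  exact div_le_div_of_nonneg_right (numericalEntropyFlux_sub_le_dotProduct hFm hFp) hΔx.le

theorem optimized_scheme_entropy_inequality_general {Δx : ℝ} (hΔx : 0 < Δx)
    {η : (ι → ℝ) → ℝ} {u : ℝ → ι → ℝ} {t : ℝ} {vm vi vp Fm Fp dm dp : ι → ℝ} {ψm ψi ψp : ℝ}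
    (hη : DifferentiableAt ℝ η (u t)) (hvi : ∀ l, vi l = fderiv ℝ η (u t) (Pi.single l 1))
    (hFm : IsEntropyConservative vm vi ψm ψi Fm) (hFp : IsEntropyConservative vi vp ψi ψp Fp)
    (hdm : 0 ≤ (vi - vm) ⬝ᵥ dm) (hdp : 0 ≤ (vp - vi) ⬝ᵥ dp)
    (hu : HasDerivAt u (-(Δx)⁻¹ • ((Fp - dp) - (Fm - dm))) t) :
    deriv (fun s => η (u s)) t +
      ((numericalEntropyFlux vi vp ψi ψp Fp - ((vi + vp) / 2) ⬝ᵥ dp) -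
        (numericalEntropyFlux vm vi ψm ψi Fm - ((vm + vi) / 2) ⬝ᵥ dm)) / Δx ≤ 0 := by
  rw [← numericalEntropyFlux_sub, ← numericalEntropyFlux_sub]
  exact entropy_inequality_of_isEntropyStable hΔx hη hvi (hFm.isEntropyStable_sub hdm)
    (hFp.isEntropyStable_sub hdp) hu

end Scheme

/-- Main theorem: semi-discrete entropy inequality for the optimized
entropy stable scheme: with the switched diffusion `d_±` and `F̂_± = F*_± - d_±`,
if `u_i' = -(F̂₊ - F̂₋)/Δx` then `d/dt η(u_i) + (q̂₊ - q̂₋)/Δx ≤ 0`.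
Here `v = ∇η` componentwise. -/
theorem optimized_scheme_entropy_inequality (m : ℕ) (Δx : ℝ) (hΔx : 0 < Δx)
    (η : (Fin m → ℝ) → ℝ) (hη : Differentiable ℝ η)
    (um ui up : ℝ → (Fin m → ℝ)) (hui : Differentiable ℝ ui)
    (v : (Fin m → ℝ) → (Fin m → ℝ))
    (hv : ∀ x l, v x l = fderiv ℝ η x (Pi.single l 1))
    (ψm ψi ψp : ℝ → ℝ) (Fsp Fsm : ℝ → (Fin m → ℝ))
    (hFp : ∀ t, ∑ l, (v (up t) l - v (ui t) l) * Fsp t l = ψp t - ψi t)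
    (hFm : ∀ t, ∑ l, (v (ui t) l - v (um t) l) * Fsm t l = ψi t - ψm t)
    (FNp FNm : ℝ → (Fin m → ℝ))
    (dp dm : ℝ → (Fin m → ℝ))
    (hdp_pos : ∀ t, (∀ l, Real.sign ((Fsp t - FNp t) l) = Real.sign ((v (up t) - v (ui t)) l)) →
      dp t = Fsp t - FNp t)
    (hdp_zero : ∀ t, ¬ (∀ l, Real.sign ((Fsp t - FNp t) l) = Real.sign ((v (up t) - v (ui t)) l)) →
      dp t = 0)
    (hdm_pos : ∀ t, (∀ l, Real.sign ((Fsm t - FNm t) l) = Real.sign ((v (ui t) - v (um t)) l)) →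
      dm t = Fsm t - FNm t)
    (hdm_zero : ∀ t, ¬ (∀ l, Real.sign ((Fsm t - FNm t) l) = Real.sign ((v (ui t) - v (um t)) l)) →
      dm t = 0)
    (qsp qsm : ℝ → ℝ)
    (hqsp : ∀ t, qsp t = (∑ l, ((v (ui t) l + v (up t) l) / 2) * Fsp t l) - (ψi t + ψp t) / 2)
    (hqsm : ∀ t, qsm t = (∑ l, ((v (um t) l + v (ui t) l) / 2) * Fsm t l) - (ψm t + ψi t) / 2)
    (Fhp Fhm : ℝ → (Fin m → ℝ))
    (hFhp : ∀ t, Fhp t = Fsp t - dp t) (hFhm : ∀ t, Fhm t = Fsm t - dm t)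
    (qhp qhm : ℝ → ℝ)
    (hqhp : ∀ t, qhp t = qsp t - ∑ l, ((v (ui t) l + v (up t) l) / 2) * dp t l)
    (hqhm : ∀ t, qhm t = qsm t - ∑ l, ((v (um t) l + v (ui t) l) / 2) * dm t l)
    (hscheme : ∀ t, deriv ui t = -(Δx)⁻¹ • (Fhp t - Fhm t)) :
    ∀ t, deriv (fun s => η (ui s)) t + (qhp t - qhm t) / Δx ≤ 0 := by
  intro t
  rw [hqhp, hqhm, hqsp, hqsm]
  exact optimized_scheme_entropy_inequality_general hΔx (hη (ui t)) (hv (ui t)) (hFm t) (hFp t)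
    (dotProduct_nonneg_of_switch (hdm_pos t) (hdm_zero t))
    (dotProduct_nonneg_of_switch (hdp_pos t) (hdp_zero t))
    (hFhp t ▸ hFhm t ▸ hscheme t ▸ (hui t).hasDerivAt)
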